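/- arXiv:2205.05923 — 3 statements merged into one kernel-verified Lean document; each statement's English description precedes it below -/
import Mathlib

section
/- Let G be a connected graph on vertex set [n]. Then the ideal I_X of 2-minors of the 2×n Hankel matrix is a minimal prime ideal of the Hankel edge ideal I_G, and consequently the height of I_G is at most n-1. -/
open MvPolynomial

/-- The Hankel binomial `g_{ij} = x_i x_{j+1} - x_j x_{i+1}` (0-indexed vertices). -/
noncomputable def hg (n : ℕ) (K : Type*) [Field K] (i j : Fin n) :
    MvPolynomial (Fin (n + 1)) K :=
  X i.castSucc * X j.succ - X j.castSucc * X i.succ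

/-- The generating set of the Hankel edge ideal of a graph `G` on `[n]`. -/
noncomputable def hgenSet (n : ℕ) (K : Type*) [Field K] (G : SimpleGraph (Fin n)) :
    Set (MvPolynomial (Fin (n + 1)) K) :=
  { f | ∃ i j : Fin n, i < j ∧ G.Adj i j ∧ f = hg n K i j }

/-- The Hankel edge ideal `I_G`. -/
noncomputable def hankelIdeal (n : ℕ) (K : Type*) [Field K] (G : SimpleGraph (Fin n)) :
    Ideal (MvPolynomial (Fin (n + 1)) K) :=
  Ideal.span (hgenSet n K G)

/-- `I_X`, the ideal of 2-minors of the 2×n Hankel matrix, i.e. `I_{K_n}`. -/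
noncomputable def IX (n : ℕ) (K : Type*) [Field K] :
    Ideal (MvPolynomial (Fin (n + 1)) K) :=
  hankelIdeal n K ⊤

/-- The height of an ideal: the infimum of the heights of primes containing it. -/
noncomputable def ht {R : Type*} [CommRing R] (I : Ideal R) : ℕ∞ :=
  ⨅ (p : PrimeSpectrum R) (_ : I ≤ p.asIdeal), Order.height p

/-- The minimal number of generators of an ideal. -/
noncomputable def mu {R : Type*} [CommRing R] (I : Ideal R) : ℕ∞ :=
  ⨅ (s : Finset R) (_ : Ideal.span (s : Set R) = I), (s.card : ℕ∞)

/-- The arithmetical rank of an ideal. -/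
noncomputable def ara {R : Type*} [CommRing R] (I : Ideal R) : ℕ∞ :=
  ⨅ (s : Finset R) (_ : (Ideal.span (s : Set R)).radical = I.radical), (s.card : ℕ∞)

/-- The labeled path `L_n` with edges `{i, i+1}` (0-indexed). -/
def pathG (n : ℕ) : SimpleGraph (Fin n) :=
  SimpleGraph.fromRel (fun i j => (i : ℕ) + 1 = (j : ℕ))

/-- The labeled cycle `C_n` with edges `{i, i+1}` and `{0, n-1}` (0-indexed). -/
def cycleG (n : ℕ) : SimpleGraph (Fin n) :=
  SimpleGraph.fromRel (fun i j =>
    (i : ℕ) + 1 = (j : ℕ) ∨ ((i : ℕ) = 0 ∧ (j : ℕ) = n - 1))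

/-- The monomial prime ideal generated by the variables with index in `[lo, hi]` (0-indexed). -/
noncomputable def Pvars (n : ℕ) (K : Type*) [Field K] (lo hi : ℕ) :
    Ideal (MvPolynomial (Fin (n + 1)) K) :=
  Ideal.span { f | ∃ i : Fin (n + 1), lo ≤ (i : ℕ) ∧ (i : ℕ) ≤ hi ∧ f = X i }

/-!
Modulo the minors, `x_a x_b` depends only on `a + b`, so a monomial depends only on its degree `d`
and its weight `w`, the sum of its indices. Hence `I_X` is the kernel of `x_i ↦ s t^i`, a prime
containing no variable. The vanishing of `g_{ij}` says that columns `i` and `j` of the Hankel matrix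
are proportional, which is a transitive relation modulo a prime containing no variable. So such a
prime over `I_G` contains every `g_{ij}` when `G` is connected, and `I_X` is minimal over `I_G`.
For a spanning tree, `I_G` has `n - 1` generators and Krull's height theorem applies.
-/

section StandardMonomial

variable {M : Type*} [CommMonoid M] {n : ℕ} {y : ℕ → M}

/-- The sequence `y 0, …, y n` satisfies the equations given by the `2`-minors of the `2 × n` Hankel
matrix. They are written without subtraction, so that they make sense in a commutative monoid. -/
def HankelRelations (n : ℕ) (y : ℕ → M) : Prop :=
  ∀ a b, a < n → b < n → y a * y (b + 1) = y b * y (a + 1)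

/-- The standard product `y n ⋯ y n * y r * y 0 ⋯ y 0` of `d` factors whose indices have sum `w`,
the normal form of all such products under the Hankel relations. It is meaningful for `w ≤ n * d`;
beyond that its indices only add up to `n * d`. -/
def standardMonomial (n : ℕ) (y : ℕ → M) : ℕ → ℕ → M
  | 0, _ => 1
  | d + 1, w => y (min w n) * standardMonomial n y d (w - n)

namespace HankelRelations

lemma mul_add_eq_mul_add (hy : HankelRelations n y) (k : ℕ) {a b : ℕ}
    (ha : a + k ≤ n) (hb : b + k ≤ n) : y a * y (b + k) = y b * y (a + k) := by
  induction k generalizing a with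
  | zero => exact mul_comm _ _
  | succ k ih =>
    calc y a * y (b + k + 1) = y (b + k) * y (a + 1) := hy _ _ (by lia) (by lia)
      _ = y (a + 1) * y (b + k) := mul_comm _ _
      _ = y b * y (a + 1 + k) := ih (by lia) (by lia)
      _ = y b * y (a + (k + 1)) := by rw [add_assoc, add_comm 1 k]

lemma mul_eq_min_mul_sub (hy : HankelRelations n y) {a b : ℕ} (ha : a ≤ n) (hb : b ≤ n) :
    y a * y b = y (min (a + b) n) * y (a + b - n) := by
  rcases le_total (a + b) n with h | h
  · rw [min_eq_left h, Nat.sub_eq_zero_of_le h, mul_comm (y (a + b))]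
    simpa only [zero_add] using hy.mul_add_eq_mul_add b h (b := 0) (by lia)
  · have exchange := hy.mul_add_eq_mul_add (n - a) (a := a) (b := a + b - n) (by lia) (by lia)
    rw [show a + b - n + (n - a) = b by lia, Nat.add_sub_of_le ha] at exchange
    rw [min_eq_right h, exchange, mul_comm]

lemma mul_standardMonomial (hy : HankelRelations n y) (d : ℕ) {a w : ℕ} (ha : a ≤ n)
    (hw : w ≤ n * d) :
    y a * standardMonomial n y d w = standardMonomial n y (d + 1) (a + w) := by
  induction d generalizing a w with
  | zero =>
    obtain rfl : w = 0 := by simpa using hw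
    simp [standardMonomial, ha]
  | succ d ih =>
    rw [Nat.mul_succ] at hw
    calc y a * (y (min w n) * standardMonomial n y d (w - n))
        = y (min (a + min w n) n) * (y (a + min w n - n) * standardMonomial n y d (w - n)) := by
          rw [← mul_assoc, hy.mul_eq_min_mul_sub ha (min_le_right w n), mul_assoc]
      _ = y (min (a + w) n) * standardMonomial n y (d + 1) (a + w - n) := by
          rw [ih (by lia) (by lia), show min (a + min w n) n = min (a + w) n by lia,
            show a + min w n - n + (w - n) = a + w - n by lia]

lemma prod_map_eq_standardMonomial (hy : HankelRelations n y) (m : Multiset ℕ)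
    (hm : ∀ a ∈ m, a ≤ n) : (m.map y).prod = standardMonomial n y m.card m.sum := by
  induction m using Multiset.induction with
  | empty => simp [standardMonomial]
  | cons a m ih =>
    have hm' : ∀ b ∈ m, b ≤ n := fun b hb => hm b (Multiset.mem_cons_of_mem hb)
    have hsum : m.sum ≤ n * m.card := by
      simpa [mul_comm] using Multiset.sum_le_card_nsmul m n hm'
    rw [Multiset.map_cons, Multiset.prod_cons, ih hm', Multiset.card_cons, Multiset.sum_cons,
      hy.mul_standardMonomial _ (hm a (Multiset.mem_cons_self a m)) hsum]

end HankelRelations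

end StandardMonomial

section Parametrization

variable {R : Type*} [CommSemiring R]

lemma aeval_monomial_eq_smul_prod_map {σ A : Type*} [CommSemiring A] [Algebra R A] (g : σ → A)
    (s : σ →₀ ℕ) (a : R) :
    aeval g (monomial s a) = a • ((Finsupp.toMultiset s).map g).prod := by
  rw [aeval_monomial, ← Algebra.smul_def, Finsupp.toMultiset_map, Finsupp.prod_toMultiset,
    Finsupp.prod_mapDomain_index (by simp) (by simp [pow_add])]

lemma exists_linearMap_X_pow_mul_X_pow {M : Type*} [AddCommMonoid M] [Module R M]
    (c : ℕ → ℕ → M) :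
    ∃ ψ : MvPolynomial (Fin 2) R →ₗ[R] M, ∀ d w, ψ (X 0 ^ d * X 1 ^ w) = c d w := by
  refine ⟨(basisMonomials (Fin 2) R).constr R fun m => c (m 0) (m 1), fun d w => ?_⟩
  have hbasis : (X 0 ^ d * X 1 ^ w : MvPolynomial (Fin 2) R) =
      basisMonomials (Fin 2) R (Finsupp.single 0 d + Finsupp.single 1 w) := by
    simp [X_pow_eq_monomial, monomial_mul]
  rw [hbasis, Module.Basis.constr_basis]
  simp

/-- The parametrization `x_i ↦ s t^i` of the cone over the rational normal curve, where `s` and `t`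
are the variables `X 0` and `X 1`. -/
noncomputable def hankelParam (n : ℕ) (R : Type*) [CommSemiring R] :
    MvPolynomial (Fin (n + 1)) R →ₐ[R] MvPolynomial (Fin 2) R :=
  aeval fun i => X 0 * X 1 ^ (i : ℕ)

lemma hankelParam_X (n : ℕ) (i : Fin (n + 1)) :
    hankelParam n R (X i) = X 0 * X 1 ^ (i : ℕ) :=
  aeval_X _ _

lemma hankelParam_monomial (n : ℕ) (s : Fin (n + 1) →₀ ℕ) (a : R) :
    hankelParam n R (monomial s a) = a • (X 0 ^ (Finsupp.toMultiset s).card *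
      X 1 ^ ((Finsupp.toMultiset s).map Fin.val).sum) := by
  rw [hankelParam, aeval_monomial_eq_smul_prod_map, Multiset.prod_map_mul, Multiset.map_const',
    Multiset.prod_replicate]
  congr 2
  induction Finsupp.toMultiset s using Multiset.induction with
  | empty => simp
  | cons i m ih => simp [ih, pow_add]

lemma HankelRelations.aeval_eq_zero_of_hankelParam_eq_zero {A : Type*} [CommSemiring A]
    [Algebra R A] {n : ℕ} {y : ℕ → A} (hy : HankelRelations n y)
    {f : MvPolynomial (Fin (n + 1)) R} (hf : hankelParam n R f = 0) :
    aeval (fun i : Fin (n + 1) => y i) f = 0 := by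
  obtain ⟨ψ, hψ⟩ := exists_linearMap_X_pow_mul_X_pow (R := R) (standardMonomial n y)
  have factor : ψ ∘ₗ (hankelParam n R).toLinearMap =
      (aeval fun i : Fin (n + 1) => y i).toLinearMap := by
    refine linearMap_ext fun s => LinearMap.ext_ring ?_
    have hs := hy.prod_map_eq_standardMonomial ((Finsupp.toMultiset s).map Fin.val) fun a ha => by
      obtain ⟨i, -, rfl⟩ := Multiset.mem_map.1 ha
      exact i.is_le
    rw [Multiset.map_map, Multiset.card_map] at hs
    change ψ (hankelParam n R (monomial s 1)) = aeval _ (monomial s 1)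
    rw [hankelParam_monomial, aeval_monomial_eq_smul_prod_map, one_smul, one_smul, hψ]
    exact hs.symm
  simpa [hf] using (LinearMap.congr_fun factor f).symm

end Parametrization

section HankelIdeal

variable {n : ℕ} {K : Type*} [Field K] {G : SimpleGraph (Fin n)}
  {Q : Ideal (MvPolynomial (Fin (n + 1)) K)}

lemma hg_self (i : Fin n) : hg n K i i = 0 :=
  sub_self _

lemma neg_hg (i j : Fin n) : -hg n K i j = hg n K j i :=
  neg_sub _ _

lemma hg_mem_hankelIdeal {i j : Fin n} (hij : G.Adj i j) : hg n K i j ∈ hankelIdeal n K G := by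
  rcases hij.ne.lt_or_gt with h | h
  · exact Ideal.subset_span ⟨i, j, h, hij, rfl⟩
  · rw [← neg_hg]
    exact neg_mem (Ideal.subset_span ⟨j, i, h, hij.symm, rfl⟩)

lemma hankelIdeal_le_iff : hankelIdeal n K G ≤ Q ↔ ∀ i j, G.Adj i j → hg n K i j ∈ Q := by
  refine ⟨fun h i j hij => h (hg_mem_hankelIdeal hij), fun h => Ideal.span_le.2 ?_⟩
  rintro _ ⟨i, j, -, hij, rfl⟩
  exact h i j hij

lemma hankelIdeal_mono {H : SimpleGraph (Fin n)} (hHG : H ≤ G) :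
    hankelIdeal n K H ≤ hankelIdeal n K G :=
  hankelIdeal_le_iff.2 fun _ _ hij => hg_mem_hankelIdeal (hHG hij)

lemma hgenSet_eq_image_edgeSet :
    hgenSet n K G = (fun e => hg n K e.inf e.sup) '' G.edgeSet := by
  ext f
  constructor
  · rintro ⟨i, j, hlt, hij, rfl⟩
    exact ⟨s(i, j), hij, by simp [hlt.le]⟩
  · rintro ⟨e, he, rfl⟩
    induction e using Sym2.ind with
    | _ i j =>
      rcases he.ne.lt_or_gt with h | h
      · exact ⟨i, j, h, he, by simp [h.le]⟩
      · exact ⟨j, i, h, he.symm, by simp [h.le]⟩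

lemma hg_mem_IX (i j : Fin n) : hg n K i j ∈ IX n K := by
  rcases eq_or_ne i j with rfl | h
  · simp [hg_self]
  · exact hg_mem_hankelIdeal h

lemma hankelRelations_mk_IX :
    HankelRelations n fun k => Ideal.Quotient.mk (IX n K) (X (Fin.ofNat (n + 1) k)) := by
  intro a b ha hb
  have hmem := hg_mem_IX (K := K) ⟨a, ha⟩ ⟨b, hb⟩
  have cast_eq (c : ℕ) (hc : c < n) : Fin.ofNat (n + 1) c = Fin.castSucc ⟨c, hc⟩ :=
    Fin.ext (Nat.mod_eq_of_lt (by lia))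
  have succ_eq (c : ℕ) (hc : c < n) : Fin.ofNat (n + 1) (c + 1) = Fin.succ ⟨c, hc⟩ :=
    Fin.ext (Nat.mod_eq_of_lt (by lia))
  beta_reduce
  rw [cast_eq a ha, cast_eq b hb, succ_eq a ha, succ_eq b hb, ← map_mul, ← map_mul]
  exact (Ideal.Quotient.mk_eq_mk_iff_sub_mem _ _).2 hmem

lemma IX_eq_ker_hankelParam : IX n K = RingHom.ker (hankelParam n K) := by
  apply le_antisymm
  · refine hankelIdeal_le_iff.2 fun i j _ => ?_
    simp only [RingHom.mem_ker, hg, map_sub, map_mul, hankelParam_X, Fin.val_castSucc, Fin.val_succ]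
    ring
  · intro f hf
    have hmk : (aeval fun i : Fin (n + 1) =>
        Ideal.Quotient.mk (IX n K) (X (Fin.ofNat (n + 1) i))) = Ideal.Quotient.mkₐ K (IX n K) := by
      ext i
      simp
    have hzero := (hankelRelations_mk_IX (K := K)).aeval_eq_zero_of_hankelParam_eq_zero
      (RingHom.mem_ker.1 hf)
    rw [hmk] at hzero
    exact Ideal.Quotient.eq_zero_iff_mem.1 hzero

instance IX_isPrime : (IX n K).IsPrime := by
  rw [IX_eq_ker_hankelParam]
  exact RingHom.ker_isPrime _

lemma X_notMem_IX (i : Fin (n + 1)) : X i ∉ IX n K := by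
  rw [IX_eq_ker_hankelParam, RingHom.mem_ker, hankelParam_X]
  exact mul_ne_zero (X_ne_zero _) (pow_ne_zero _ (X_ne_zero _))

lemma hg_mem_trans [Q.IsPrime] {i j k : Fin n} (hXj : X j.castSucc ∉ Q) (hij : hg n K i j ∈ Q)
    (hjk : hg n K j k ∈ Q) : hg n K i k ∈ Q := by
  have syzygy : X j.castSucc * hg n K i k =
      X i.castSucc * hg n K j k + X k.castSucc * hg n K i j := by
    simp only [hg]
    ring
  have hmem : X j.castSucc * hg n K i k ∈ Q :=
    syzygy ▸ add_mem (Q.mul_mem_left _ hjk) (Q.mul_mem_left _ hij)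
  exact (Ideal.IsPrime.mem_or_mem ‹_› hmem).resolve_left hXj

lemma hg_mem_of_reachable [Q.IsPrime] (hX : ∀ i : Fin n, X i.castSucc ∉ Q)
    (hGQ : hankelIdeal n K G ≤ Q) {i j : Fin n} (hij : G.Reachable i j) : hg n K i j ∈ Q := by
  obtain ⟨p⟩ := hij
  induction p with
  | nil => simp [hg_self]
  | cons hadj _ ih => exact hg_mem_trans (hX _) (hGQ (hg_mem_hankelIdeal hadj)) ih

lemma IX_mem_minimalPrimes_hankelIdeal (hG : G.Preconnected) :
    IX n K ∈ (hankelIdeal n K G).minimalPrimes := by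
  refine ⟨⟨IX_isPrime, hankelIdeal_mono le_top⟩, ?_⟩
  rintro Q ⟨hQ, hGQ⟩ hQX
  exact hankelIdeal_le_iff.2 fun i j _ =>
    hg_mem_of_reachable (fun k hk => X_notMem_IX _ (hQX hk)) hGQ (hG i j)

lemma height_IX_le_ncard_edgeSet (hG : G.Preconnected) :
    (IX n K).height ≤ G.edgeSet.ncard := by
  have hfin : (hgenSet n K G).Finite := by
    rw [hgenSet_eq_image_edgeSet]
    exact G.edgeSet.toFinite.image _
  calc (IX n K).height ≤ (hgenSet n K G).ncard :=
        Ideal.height_le_card_of_mem_minimalPrimes_span hfin (IX_mem_minimalPrimes_hankelIdeal hG)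
    _ ≤ G.edgeSet.ncard := by
        rw [hgenSet_eq_image_edgeSet]
        exact_mod_cast Set.ncard_image_le G.edgeSet.toFinite

end HankelIdeal

lemma ht_le_height_of_le {R : Type*} [CommRing R] {I p : Ideal R} [hp : p.IsPrime] (hIp : I ≤ p) :
    ht I ≤ p.height :=
  (iInf₂_le (⟨p, hp⟩ : PrimeSpectrum R) hIp).trans_eq (PrimeSpectrum.height_eq_orderHeight _).symm

/-- For a connected graph `G` on `[n]`, `I_X` is a minimal prime of
`I_G`, and consequently `height I_G ≤ n - 1`. -/
theorem stmt_0 (n : ℕ) (K : Type*) [Field K] (hn : 1 ≤ n)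
    (G : SimpleGraph (Fin n)) (hG : G.Connected) :
    IX n K ∈ (hankelIdeal n K G).minimalPrimes ∧
      ht (hankelIdeal n K G) ≤ ((n - 1 : ℕ) : ℕ∞) := by
  refine ⟨IX_mem_minimalPrimes_hankelIdeal hG.preconnected, ?_⟩
  obtain ⟨T, -, hT⟩ := hG.exists_isTree_le
  have hcard : T.edgeSet.ncard = n - 1 := by
    have := (SimpleGraph.isTree_iff_connected_and_card.1 hT).2
    rw [Nat.card_coe_set_eq, Nat.card_fin] at this
    lia
  calc ht (hankelIdeal n K G) ≤ (IX n K).height := ht_le_height_of_le (hankelIdeal_mono le_top)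
    _ ≤ T.edgeSet.ncard := height_IX_le_ncard_edgeSet hT.connected.preconnected
    _ = ((n - 1 : ℕ) : ℕ∞) := by rw [hcard]
end

section
/- Let G be a connected labeled semi-Hamiltonian graph on vertex set [n]. Then S/I_G is a complete intersection if and only if G = L_n, the path with edges {i,i+1} for i=1,...,n-1. -/
open MvPolynomial

/-!
The Hankel binomials `x_i x_{j+1} - x_j x_{i+1}` are linearly independent quadrics, so `I_G` has as
many minimal generators as `G` has edges. Its height is `n - 1`. The upper bound holds because
`{1, n}` is not an edge, so `I_G` lies in the ideal `(x_2, ..., x_n)`. For the lower bound, take a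
prime `p` containing the binomials of the path. If `x_3 ∈ p`, then `x_2, ..., x_n ∈ p`. Otherwise
`x_1 x_3 - x_2 ^ 2 ∈ p` shows that `p` is not extended from `K[x_2, ..., x_{n+1}]`, and contracting
to that ring lowers the height, so induction applies. Hence `S/I_G` is a complete intersection if
and only if `G` has `n - 1` edges, which is the number of edges of the path `L_n ⊆ G`.
-/

section Height

variable {R : Type*} [CommRing R]

theorem ht_eq_height (I : Ideal R) : ht I = I.height := by
  refine le_antisymm (le_iInf₂ fun J hJ => ?_) (le_iInf₂ fun p hp => ?_)
  · exact iInf₂_le (⟨J, hJ.isPrime⟩ : PrimeSpectrum R) hJ.1.2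
  · exact (Ideal.height_mono hp).trans_eq p.height_eq_orderHeight

theorem height_comap_C_add_one_le [IsNoetherianRing R] {P : Ideal (Polynomial R)} [P.IsPrime]
    {f : Polynomial R} {k : ℕ} (hf : f ∈ P) (hk : Polynomial.C (f.coeff k) ∉ P) :
    (P.comap Polynomial.C).height + 1 ≤ P.height := by
  set p := P.comap Polynomial.C
  have : (p.map Polynomial.C).LiesOver p := ⟨((Ideal.gc_map_comap _).u_l_u_eq_u P).symm⟩
  have height_le : p.height ≤ (p.map Polynomial.C).height := by
    rw [Ideal.height_eq_height_add_of_liesOver_of_hasGoingDown p (p.map Polynomial.C)]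
    exact le_self_add
  have map_lt : p.map Polynomial.C < P :=
    lt_of_le_not_ge Ideal.map_comap_le fun h => hk (Ideal.mem_map_C_iff.1 (h hf) k)
  exact (add_le_add_left height_le 1).trans (Ideal.height_add_one_le_of_lt_of_isPrime map_lt)

theorem height_comap_rename_succ_add_one_le [IsNoetherianRing R] {n k : ℕ}
    {p : Ideal (MvPolynomial (Fin (n + 1)) R)} [p.IsPrime] {f : MvPolynomial (Fin (n + 1)) R}
    (hf : f ∈ p) (hk : rename Fin.succ ((finSuccEquiv R n f).coeff k) ∉ p) :
    (p.comap (rename (R := R) (Fin.succ (n := n)))).height + 1 ≤ p.height := by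
  let e : Polynomial (MvPolynomial (Fin n) R) ≃+* MvPolynomial (Fin (n + 1)) R :=
    (finSuccEquiv R n).symm.toRingEquiv
  have e_C (g : MvPolynomial (Fin n) R) : e (Polynomial.C g) = rename Fin.succ g := by
    refine (finSuccEquiv R n).symm_apply_eq.2 ?_
    induction g using MvPolynomial.induction_on with
    | C a => simp [finSuccEquiv_apply]
    | add g h hg hh => simp [hg, hh]
    | mul_X g i hg => simp [hg, finSuccEquiv_X_succ]
  have comap_comap : (p.comap e).comap Polynomial.C = p.comap (rename (R := R) Fin.succ) := by
    ext g
    simp only [Ideal.mem_comap, e_C]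
  rw [← comap_comap, ← e.height_comap p]
  refine height_comap_C_add_one_le (f := finSuccEquiv R n f) (k := k) ?_ ?_
  · simpa [e] using hf
  · rwa [Ideal.mem_comap, e_C]

theorem ker_killCompl {σ τ : Type*} {f : σ → τ} (hf : Function.Injective f) :
    RingHom.ker (killCompl (R := R) hf) = Ideal.span (X '' (Set.range f)ᶜ) := by
  ext p
  have exists_iff (m : τ →₀ ℕ) :
      (∃ i ∈ (Set.range f)ᶜ, m i ≠ 0) ↔ m ∉ Set.range (Finsupp.mapDomain f) := by
    simp [Finsupp.mem_range_mapDomain_iff f hf]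
  simp only [mem_ideal_span_X_image, exists_iff, RingHom.mem_ker, ← support_eq_empty,
    support_killCompl, Finset.eq_empty_iff_forall_notMem, Finset.mem_preimage]
  exact ⟨fun h m hm ⟨u, hu⟩ => h u (hu ▸ hm), fun h u hu => h _ hu ⟨u, rfl⟩⟩

theorem isPrime_span_X_image [IsDomain R] {σ : Type*} (s : Set σ) :
    (Ideal.span (X '' s : Set (MvPolynomial σ R))).IsPrime := by
  rw [← compl_compl s, ← Subtype.range_coe (s := sᶜ), ← ker_killCompl Subtype.val_injective]
  exact RingHom.ker_isPrime _

theorem height_span_X_image [IsDomain R] [IsNoetherianRing R] {σ : Type*} [Finite σ]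
    (s : Set σ) : (Ideal.span (X '' s : Set (MvPolynomial σ R))).height = s.encard := by
  have isPrime (t : Set σ) := isPrime_span_X_image (R := R) t
  refine le_antisymm ?_ ?_
  · calc
      _ ≤ ((Ideal.span (X '' s : Set (MvPolynomial σ R))).spanFinrank : ℕ∞) :=
        Ideal.height_le_spanFinrank _ (isPrime s).ne_top
      _ ≤ (X '' s : Set (MvPolynomial σ R)).encard := Submodule.spanFinrank_span_le_encard _
      _ ≤ s.encard := Set.encard_image_le _ _
  · induction s, s.toFinite using Set.Finite.induction_on with
    | empty => simp
    | @insert i s hi _ ih =>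
      have image_subset := Set.image_mono (f := X (R := R)) (Set.subset_insert i s)
      have span_lt : Ideal.span (X '' s : Set (MvPolynomial σ R)) <
          Ideal.span (X '' insert i s) := by
        refine lt_of_le_not_ge (Ideal.span_mono image_subset) fun h => ?_
        have X_mem := h (Ideal.subset_span ⟨i, Set.mem_insert i s, rfl⟩)
        obtain ⟨j, hj, hij⟩ := mem_ideal_span_X_image.1 X_mem (Finsupp.single i 1) (by simp)
        exact hi ((Finsupp.single_apply_ne_zero.1 hij).1 ▸ hj)
      rw [Set.encard_insert_of_notMem hi]
      exact (add_le_add_left ih 1).trans (Ideal.height_add_one_le_of_lt_of_isPrime span_lt)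

theorem height_span_X_image_Ioo [IsDomain R] [IsNoetherianRing R] (n : ℕ) :
    (Ideal.span (X '' Set.Ioo 0 (Fin.last (n + 1)) :
      Set (MvPolynomial (Fin (n + 2)) R))).height = n := by
  rw [height_span_X_image, ← Finset.coe_Ioo, Set.encard_coe_eq_coe_finsetCard, Fin.card_Ioo]
  simp

theorem X_mem_of_hankelMinor_mem {n : ℕ} {p : Ideal (MvPolynomial (Fin (n + 3)) R)} [p.IsPrime]
    (hp : ∀ i : Fin (n + 1), (X i.castSucc.castSucc * X i.succ.succ - X i.succ.castSucc ^ 2 :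
      MvPolynomial (Fin (n + 3)) R) ∈ p) (h1 : X 1 ∈ p) (i : Fin (n + 1)) :
    X i.succ.castSucc ∈ p := by
  induction i using Fin.induction with
  | zero => exact h1
  | succ i ih =>
    have sq_mem := (Submodule.sub_mem_iff_right _ (p.mul_mem_right _ ih)).1 (hp i.succ)
    exact Ideal.IsPrime.mem_of_pow_mem ‹_› 2 sq_mem

theorem le_height_of_hankelMinor_mem [IsDomain R] [IsNoetherianRing R] {n : ℕ}
    {p : Ideal (MvPolynomial (Fin (n + 2)) R)} [p.IsPrime]
    (hp : ∀ i : Fin n, (X i.castSucc.castSucc * X i.succ.succ - X i.succ.castSucc ^ 2 :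
      MvPolynomial (Fin (n + 2)) R) ∈ p) : n ≤ p.height := by
  induction n with
  | zero => simp
  | succ n ih =>
    by_cases h2 : X 2 ∈ p
    · have sq_mem : X 1 ^ 2 ∈ p := (Submodule.sub_mem_iff_right _ (p.mul_mem_left _ h2)).1 (hp 0)
      have X_mem := X_mem_of_hankelMinor_mem hp (Ideal.IsPrime.mem_of_pow_mem ‹_› 2 sq_mem)
      have span_le : Ideal.span (X '' Set.Ioo 0 (Fin.last (n + 2))) ≤ p := by
        rw [Ideal.span_le]
        rintro _ ⟨i, ⟨zero_lt, lt_last⟩, rfl⟩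
        obtain ⟨j, rfl⟩ := Fin.exists_castSucc_eq.2 lt_last.ne
        obtain ⟨k, rfl⟩ := Fin.exists_succ_eq.2 (Fin.castSucc_pos_iff.1 zero_lt).ne'
        exact X_mem k
      exact (height_span_X_image_Ioo (R := R) (n + 1)).ge.trans (Ideal.height_mono span_le)
    · have contraction := ih (p := p.comap (rename Fin.succ)) fun i => by
        simpa using hp i.succ
      have minor_mem : X 0 * X (Fin.succ 1) - X (Fin.succ 0) ^ 2 ∈ p := hp 0
      have coeff_one : (finSuccEquiv R (n + 2)
          (X 0 * X (Fin.succ 1) - X (Fin.succ 0) ^ 2)).coeff 1 = X 1 := by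
        simp only [map_sub, map_mul, map_pow, finSuccEquiv_X_zero, finSuccEquiv_X_succ]
        simp [← map_pow]
      exact (add_le_add_left contraction 1).trans
        (height_comap_rename_succ_add_one_le (k := 1) minor_mem (by rwa [coeff_one, rename_X]))

end Height

section Generators

theorem homogeneousComponent_mul_of_mem_pow_idealOfVars {R σ : Type*} [CommSemiring R] {d : ℕ}
    {f : MvPolynomial σ R} (hf : f ∈ idealOfVars σ R ^ d) (r : MvPolynomial σ R) :
    homogeneousComponent d (r * f) = constantCoeff r • homogeneousComponent d f := by
  classical
  ext m
  simp only [coeff_homogeneousComponent, coeff_smul, smul_eq_mul, mul_ite, mul_zero]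
  split_ifs with hm
  · rw [coeff_mul, Finset.sum_eq_single (0, m)]
    · rfl
    · rintro ⟨a, b⟩ hab hne
      rw [Finset.HasAntidiagonal.mem_antidiagonal] at hab
      have a_ne_zero : a.degree ≠ 0 := by
        rw [Ne, Finsupp.degree_eq_zero_iff]
        rintro rfl
        exact hne (by simpa using hab)
      have degree_add : a.degree + b.degree = m.degree := by rw [← hab, map_add]
      rw [(mem_pow_idealOfVars_iff' d f).1 hf b (by omega), mul_zero]
    · simp
  · rfl

theorem mem_pow_idealOfVars_of_isHomogeneous {R σ : Type*} [CommSemiring R] {d : ℕ}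
    {f : MvPolynomial σ R} (hf : f.IsHomogeneous d) : f ∈ idealOfVars σ R ^ d :=
  (mem_pow_idealOfVars_iff' d f).2 fun _ hm => hf.coeff_eq_zero hm.ne

theorem homogeneousComponent_mem_span {R σ : Type*} [CommSemiring R] {d : ℕ}
    {T : Set (MvPolynomial σ R)} (hT : T ⊆ (idealOfVars σ R ^ d : Ideal (MvPolynomial σ R)))
    {f : MvPolynomial σ R} (hf : f ∈ Ideal.span T) :
    homogeneousComponent d f ∈ Submodule.span R (homogeneousComponent d '' T) := by
  induction hf using Submodule.closure_induction with
  | zero => simp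
  | add f g _ _ hf hg =>
    rw [map_add]
    exact Submodule.add_mem _ hf hg
  | smul_mem r f hf =>
    rw [smul_eq_mul, homogeneousComponent_mul_of_mem_pow_idealOfVars (hT hf)]
    exact Submodule.smul_mem _ _ (Submodule.subset_span ⟨f, hf, rfl⟩)

theorem mu_span_le_encard {R : Type*} [CommRing R] (s : Set R) :
    mu (Ideal.span s) ≤ s.encard := by
  obtain hs | hs := s.finite_or_infinite
  · rw [hs.encard_eq_coe_toFinset_card]
    exact iInf₂_le hs.toFinset (by rw [hs.coe_toFinset])
  · simp [hs.encard_eq]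

theorem encard_le_card_of_linearIndepOn {R M ι : Type*} [Ring R] [StrongRankCondition R]
    [AddCommGroup M] [Module R M] {v : ι → M} {s : Set ι} (linearIndep : LinearIndepOn R v s)
    {T : Finset M} (hT : ∀ i ∈ s, v i ∈ Submodule.span R (T : Set M)) : s.encard ≤ T.card := by
  have range_subset : Set.range (fun i : s => v i) ⊆ Submodule.span R (T : Set M) :=
    Set.range_subset_iff.2 fun i => hT i i.2
  have card_le := linearIndependent_le_span' _ linearIndep T range_subset
  change Cardinal.toENat (Cardinal.mk s) ≤ T.card
  exact Cardinal.toENat_le_natCast.2 (card_le.trans_eq (congrArg Nat.cast (Fintype.card_coe T)))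

theorem mu_span_image_of_isHomogeneous {R σ ι : Type*} [CommRing R] [Nontrivial R] {d : ℕ}
    {v : ι → MvPolynomial σ R} {s : Set ι} (homogeneous : ∀ i ∈ s, (v i).IsHomogeneous d)
    (linearIndep : LinearIndepOn R v s) : mu (Ideal.span (v '' s)) = s.encard := by
  classical
  refine le_antisymm ((mu_span_le_encard _).trans (Set.encard_image_le v s))
    (le_iInf₂ fun T hT => ?_)
  have span_le : Ideal.span (T : Set (MvPolynomial σ R)) ≤ idealOfVars σ R ^ d := by
    rw [hT, Ideal.span_le, Set.image_subset_iff]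
    exact fun i hi => mem_pow_idealOfVars_of_isHomogeneous (homogeneous i hi)
  have mem_span (i) (hi : i ∈ s) : v i ∈ Submodule.span R
      (T.image (homogeneousComponent d) : Set (MvPolynomial σ R)) := by
    have v_mem : v i ∈ Ideal.span (T : Set (MvPolynomial σ R)) :=
      hT ▸ Ideal.subset_span ⟨i, hi, rfl⟩
    simpa [homogeneousComponent_of_mem (homogeneous i hi)] using
      homogeneousComponent_mem_span (Ideal.span_le.1 span_le) v_mem
  exact (encard_le_card_of_linearIndepOn linearIndep mem_span).trans
    (mod_cast Finset.card_image_le)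

end Generators

section EdgePairs

/-- The edges of a graph on a linearly ordered vertex set, each listed once as the ordered pair
`(i, j)` with `i < j`, which is how they index the Hankel binomials. -/
def edgePairs {V : Type*} [LinearOrder V] (G : SimpleGraph V) : Set (V × V) :=
  {e | e.1 < e.2 ∧ G.Adj e.1 e.2}

theorem edgePairs_subset_edgePairs {V : Type*} [LinearOrder V] {G H : SimpleGraph V} :
    edgePairs G ⊆ edgePairs H ↔ G ≤ H := by
  refine ⟨fun h i j hij => ?_, fun h e he => ⟨he.1, h he.2⟩⟩
  obtain hlt | hlt := hij.ne.lt_or_gt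
  · exact (h (a := (i, j)) ⟨hlt, hij⟩).2
  · exact (h (a := (j, i)) ⟨hlt, hij.symm⟩).2.symm

theorem pathG_adj_iff_of_lt {n : ℕ} {i j : Fin n} (hij : i < j) :
    (pathG n).Adj i j ↔ (i : ℕ) + 1 = j := by
  rw [Fin.lt_def] at hij
  simp only [pathG, SimpleGraph.fromRel_adj, ne_eq, Fin.ext_iff]
  omega

theorem encard_edgePairs_pathG (m : ℕ) : (edgePairs (pathG (m + 1))).encard = m := by
  have eq_range : edgePairs (pathG (m + 1)) = Set.range fun i : Fin m => (i.castSucc, i.succ) := by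
    ext ⟨i, j⟩
    constructor
    · rintro ⟨hij, hadj⟩
      have val_eq : (i : ℕ) + 1 = j := (pathG_adj_iff_of_lt hij).1 hadj
      exact ⟨⟨i, by omega⟩, by simp [val_eq]⟩
    · rintro ⟨k, hk⟩
      obtain ⟨rfl, rfl⟩ := Prod.mk.inj hk
      exact ⟨k.castSucc_lt_succ, (pathG_adj_iff_of_lt k.castSucc_lt_succ).2 rfl⟩
  have injective : Function.Injective fun i : Fin m => (i.castSucc, i.succ) := fun i j h =>
    Fin.succ_injective _ (Prod.ext_iff.1 h).2
  rw [eq_range, ← Set.image_univ, injective.encard_image]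
  simp

end EdgePairs

section HankelEdgeIdeal

theorem coeff_X_mul_X {R σ : Type*} [CommSemiring R] [DecidableEq σ] (a b c d : σ) :
    coeff (Finsupp.single a 1 + Finsupp.single b 1) (X c * X d : MvPolynomial σ R) =
      if (c = a ∧ d = b) ∨ (c = b ∧ d = a) then 1 else 0 := by
  rw [X, X, monomial_mul, coeff_monomial, mul_one]
  congr 1
  rw [Finsupp.single_add_single_eq_single_add_single one_ne_zero one_ne_zero]
  simp

variable {n : ℕ} {K : Type*} [Field K]

theorem hankelIdeal_eq_span_image (G : SimpleGraph (Fin n)) :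
    hankelIdeal n K G = Ideal.span ((fun e => hg n K e.1 e.2) '' edgePairs G) := by
  rw [hankelIdeal]
  congr 1
  ext f
  constructor
  · rintro ⟨i, j, hij, hadj, rfl⟩
    exact ⟨(i, j), ⟨hij, hadj⟩, rfl⟩
  · rintro ⟨⟨i, j⟩, ⟨hij, hadj⟩, rfl⟩
    exact ⟨i, j, hij, hadj, rfl⟩

theorem isHomogeneous_hg (i j : Fin n) : (hg n K i j).IsHomogeneous 2 :=
  ((isHomogeneous_X K _).mul (isHomogeneous_X K _)).sub
    ((isHomogeneous_X K _).mul (isHomogeneous_X K _))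

theorem coeff_hg {i j k l : Fin n} (hij : i < j) (hkl : k < l) :
    coeff (Finsupp.single i.castSucc 1 + Finsupp.single j.succ 1) (hg n K k l) =
      (if k = i ∧ l = j then 1 else 0) -
        if (k : ℕ) + 1 = i ∧ (l : ℕ) = j + 1 then 1 else 0 := by
  rw [hg, coeff_sub, coeff_X_mul_X, coeff_X_mul_X]
  simp only [Fin.ext_iff, Fin.val_castSucc, Fin.val_succ]
  rw [Fin.lt_def] at hij hkl
  congr 2 <;> exact propext (by omega)

theorem linearIndepOn_hg :
    LinearIndepOn K (fun e => hg n K e.1 e.2) {e : Fin n × Fin n | e.1 < e.2} := by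
  rw [linearIndepOn_iff']
  rintro T c hT sum_eq_zero ⟨i, j⟩ mem_T
  -- Among the binomials only `g_{ij}` and `g_{i-1,j+1}` involve the monomial `x_i x_{j+1}`.
  induction i using WellFoundedLT.induction generalizing j with | ind i ih =>
  have sum_coeff : ∑ e ∈ T, c e * coeff (Finsupp.single i.castSucc 1 + Finsupp.single j.succ 1)
      (hg n K e.1 e.2) = 0 := by
    simpa [coeff_sum] using congrArg (coeff _) sum_eq_zero
  rw [Finset.sum_eq_single_of_mem (i, j) mem_T] at sum_coeff
  · simpa [coeff_hg (hT mem_T) (hT mem_T)] using sum_coeff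
  · rintro ⟨k, l⟩ kl_mem kl_ne
    have not_eq : ¬(k = i ∧ l = j) := fun h => kl_ne (Prod.ext h.1 h.2)
    rw [coeff_hg (hT mem_T) (hT kl_mem), if_neg not_eq]
    split_ifs with h
    · rw [ih k (Fin.lt_def.2 (h.1 ▸ Nat.lt_succ_self _)) l kl_mem, zero_mul]
    · simp

theorem mu_hankelIdeal (G : SimpleGraph (Fin n)) :
    mu (hankelIdeal n K G) = (edgePairs G).encard := by
  rw [hankelIdeal_eq_span_image]
  exact mu_span_image_of_isHomogeneous (fun e _ => isHomogeneous_hg e.1 e.2)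
    (linearIndepOn_hg.mono fun _ he => he.1)

theorem hankelIdeal_le_span_X_image {m : ℕ} {G : SimpleGraph (Fin (m + 1))}
    (hne : ¬ G.Adj 0 (Fin.last m)) :
    hankelIdeal (m + 1) K G ≤ Ideal.span (X '' Set.Ioo 0 (Fin.last (m + 1))) := by
  rw [hankelIdeal, Ideal.span_le]
  rintro _ ⟨i, j, hij, hadj, rfl⟩
  have X_mem {k : Fin (m + 2)} (zero_lt : 0 < k) (lt_last : k < Fin.last (m + 1)) :
      X k ∈ Ideal.span (X '' Set.Ioo 0 (Fin.last (m + 1)) : Set (MvPolynomial _ K)) :=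
    Ideal.subset_span ⟨k, ⟨zero_lt, lt_last⟩, rfl⟩
  refine Ideal.sub_mem _ ?_ (Ideal.mul_mem_right _ _
    (X_mem (Fin.castSucc_pos_iff.2 (i.zero_le.trans_lt hij)) j.castSucc_lt_last))
  obtain rfl | i_ne := eq_or_ne i 0
  · have j_ne : j ≠ Fin.last m := by rintro rfl; exact hne hadj
    have succ_lt := Fin.succ_lt_succ_iff.2 (Fin.lt_last_iff_ne_last.2 j_ne)
    exact Ideal.mul_mem_left _ _ (X_mem j.succ_pos succ_lt)
  · have castSucc_pos := Fin.castSucc_pos_iff.2 (Fin.pos_of_ne_zero i_ne)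
    exact Ideal.mul_mem_right _ _ (X_mem castSucc_pos i.castSucc_lt_last)

theorem ht_hankelIdeal {m : ℕ} {G : SimpleGraph (Fin (m + 1))} (hpath : pathG (m + 1) ≤ G)
    (hne : ¬ G.Adj 0 (Fin.last m)) : ht (hankelIdeal (m + 1) K G) = m := by
  refine le_antisymm ?_ (le_iInf₂ fun p hp => ?_)
  · rw [ht_eq_height, ← height_span_X_image_Ioo (R := K) m]
    exact Ideal.height_mono (hankelIdeal_le_span_X_image hne)
  · rw [← p.height_eq_orderHeight]
    refine le_height_of_hankelMinor_mem fun i => ?_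
    have adj := hpath ((pathG_adj_iff_of_lt i.castSucc_lt_succ).2 rfl)
    have hg_mem := hp (Ideal.subset_span ⟨_, _, i.castSucc_lt_succ, adj, rfl⟩)
    rwa [hg, Fin.succ_castSucc, ← sq] at hg_mem

end HankelEdgeIdeal

/-- For a connected labeled semi-Hamiltonian graph `G` on `[n]`,
`S/I_G` is a complete intersection iff `G = L_n`. -/
theorem stmt_8 (n : ℕ) (K : Type*) [Field K] (hn : 2 ≤ n)
    (G : SimpleGraph (Fin n)) (hG : G.Connected) (hpath : pathG n ≤ G)
    (hne : ¬ G.Adj ⟨0, by omega⟩ ⟨n - 1, by omega⟩) :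
    mu (hankelIdeal n K G) = ht (hankelIdeal n K G) ↔ G = pathG n := by
  obtain ⟨m, rfl⟩ : ∃ m, n = m + 1 := ⟨n - 1, by omega⟩
  rw [mu_hankelIdeal, ht_hankelIdeal hpath hne, ← encard_edgePairs_pathG]
  constructor
  · intro encard_eq
    have pairs_subset := edgePairs_subset_edgePairs.2 hpath
    have finite := (edgePairs (pathG (m + 1))).toFinite
    have pairs_eq := finite.eq_of_subset_of_encard_le pairs_subset encard_eq.le
    exact le_antisymm (edgePairs_subset_edgePairs.1 pairs_eq.ge) hpath
  · rintro rfl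
    rfl
end

section
/- Let G be a connected labeled Hamiltonian or labeled semi-Hamiltonian graph on vertex set [n]. Then the arithmetical rank of I_G equals n-1; in particular, I_G is a set-theoretic complete intersection. -/
open MvPolynomial

/-!
At a point with values in a domain, the minors of the path either force all interior coordinates
`x₁, …, xₙ₋₁` to vanish or put the point on the rational normal curve. In both cases two coordinates
determine the others up to algebraic dependence, so every prime containing `I_G` has height at least
`n - 1`. Conversely, `n - 1` equations suffice for the zero set: without the edge joining the two
end vertices it is that of the `n - 1` minors of the path, and with this edge it is the rational
normal curve, cut out by the `n - 1` Robbiano–Valla polynomials.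
-/

section PartialEval

variable (R : Type*) {σ L : Type*} [CommRing R] [CommRing L] [Algebra R L] [DecidableEq σ]

/-- The substitution that keeps the variables in `T` and replaces every other variable by the
corresponding coordinate of the point `a`. -/
noncomputable def partialEval (a : σ → L) (T : Finset σ) :
    MvPolynomial σ R →ₐ[R] MvPolynomial σ L :=
  aeval (T.piecewise X (C ∘ a))

variable {R} {a : σ → L} {T U : Finset σ} {i : σ}

lemma partialEval_X_of_mem (hi : i ∈ T) : partialEval R a T (X i) = X i := by
  simp [partialEval, hi]

lemma partialEval_X_of_notMem (hi : i ∉ T) : partialEval R a T (X i) = C (a i) := by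
  simp [partialEval, hi]

lemma partialEval_partialEval_of_subset (hTU : T ⊆ U) (f : MvPolynomial σ R) :
    partialEval L a T (partialEval R a U f) = partialEval R a T f := by
  suffices ((partialEval L a T).restrictScalars R).comp (partialEval R a U) =
      partialEval R a T from DFunLike.congr_fun this f
  ext1 j
  rw [AlgHom.comp_apply, AlgHom.restrictScalars_apply]
  by_cases hU : j ∈ U
  · rw [partialEval_X_of_mem hU]
    simp [partialEval, Finset.piecewise]
  · have hT : j ∉ T := fun hj ↦ hU (hTU hj)
    rw [partialEval_X_of_notMem hU, partialEval_X_of_notMem hT, ← algebraMap_eq, AlgHom.commutes]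

lemma ker_partialEval_anti (hTU : T ⊆ U) :
    RingHom.ker (partialEval R a U) ≤ RingHom.ker (partialEval R a T) := fun f hf ↦ by
  rw [RingHom.mem_ker] at hf ⊢
  rw [← partialEval_partialEval_of_subset hTU, hf, map_zero]

lemma exists_forall_partialEval_eq_C {s : Finset σ} {c : L}
    (hc : c ∈ Algebra.adjoin R (a '' s)) :
    ∃ f : MvPolynomial σ R, ∀ T, Disjoint T s → partialEval R a T f = C c := by
  induction hc using Algebra.adjoin_induction with
  | mem _ h =>
    obtain ⟨j, hj, rfl⟩ := h
    exact ⟨X j, fun T hT ↦ partialEval_X_of_notMem fun hjT ↦ Finset.disjoint_left.1 hT hjT hj⟩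
  | algebraMap r =>
    exact ⟨algebraMap R _ r, fun T _ ↦ AlgHom.commutes _ r⟩
  | add _ _ _ _ hx hy =>
    obtain ⟨⟨f, hf⟩, g, hg⟩ := hx, hy
    exact ⟨f + g, fun T hT ↦ by rw [map_add, hf T hT, hg T hT, C_add]⟩
  | mul _ _ _ _ hx hy =>
    obtain ⟨⟨f, hf⟩, g, hg⟩ := hx, hy
    exact ⟨f * g, fun T hT ↦ by rw [map_mul, hf T hT, hg T hT, C_mul]⟩

lemma exists_forall_partialEval_eq_aeval {s : Finset σ} (i : σ)
    (q : Polynomial (Algebra.adjoin R (a '' s))) :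
    ∃ f : MvPolynomial σ R, ∀ T, Disjoint T s →
      partialEval R a T f =
        Polynomial.aeval (partialEval R a T (X i)) (q.map (algebraMap _ L)) := by
  induction q using Polynomial.induction_on' with
  | add p q hp hq =>
    obtain ⟨⟨f, hf⟩, g, hg⟩ := hp, hq
    exact ⟨f + g, fun T hT ↦ by
      rw [map_add, hf T hT, hg T hT, Polynomial.map_add, map_add]⟩
  | monomial k c =>
    obtain ⟨f, hf⟩ := exists_forall_partialEval_eq_C c.2
    refine ⟨f * X i ^ k, fun T hT ↦ ?_⟩
    rw [map_mul, map_pow, hf T hT, Polynomial.map_monomial, Polynomial.aeval_monomial]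
    rfl

lemma ker_partialEval_insert_lt {s : Finset σ} (hTs : Disjoint T s) (hiT : i ∉ T) (his : i ∉ s)
    (hi : IsAlgebraic (Algebra.adjoin R (a '' s)) (a i)) :
    RingHom.ker (partialEval R a (insert i T)) < RingHom.ker (partialEval R a T) := by
  refine SetLike.lt_iff_le_and_exists.2 ⟨ker_partialEval_anti (Finset.subset_insert i T), ?_⟩
  obtain ⟨q, hq, hqi⟩ := hi
  obtain ⟨f, hf⟩ := exists_forall_partialEval_eq_aeval i q
  have hq' : q.map (algebraMap _ L) ≠ 0 :=
    (Polynomial.map_ne_zero_iff Subtype.val_injective).2 hq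
  refine ⟨f, ?_, fun hf0 ↦ ?_⟩
  · rw [RingHom.mem_ker, hf T hTs, partialEval_X_of_notMem hiT, ← algebraMap_eq,
      Polynomial.aeval_algebraMap_apply, Polynomial.aeval_map_algebraMap, hqi, map_zero]
  · rw [RingHom.mem_ker, hf _ (Finset.disjoint_insert_left.2 ⟨his, hTs⟩),
      partialEval_X_of_mem (Finset.mem_insert_self i T)] at hf0
    exact transcendental_X L i ⟨_, hq', hf0⟩

lemma ker_partialEval_empty :
    RingHom.ker (partialEval R a ∅) = RingHom.ker (aeval (R := R) a) := by
  ext f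
  have hf : partialEval R a ∅ f = C (aeval a f) := by
    rw [partialEval, Finset.piecewise_empty, ← algebraMap_eq]
    exact aeval_algebraMap_apply (MvPolynomial σ L) a f
  rw [RingHom.mem_ker, RingHom.mem_ker, hf, C_eq_zero]

end PartialEval

/-- One half of the dimension formula `ht P + tr.deg (S / P) = n`: releasing the coordinates
outside `s` one at a time gives a strict chain of primes below `P`. -/
theorem card_le_height_ker_aeval_add_card {R σ L : Type*} [CommRing R] [CommRing L] [IsDomain L]
    [Algebra R L] [Fintype σ] {a : σ → L} {s : Finset σ}
    (h : ∀ i ∉ s, IsAlgebraic (Algebra.adjoin R (a '' s)) (a i)) :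
    (Fintype.card σ : ℕ∞) ≤ (RingHom.ker (aeval (R := R) a)).height + s.card := by
  classical
  have hprime (T : Finset σ) : (RingHom.ker (partialEval R a T)).IsPrime := RingHom.ker_isPrime _
  have chain (T : Finset σ) (hTs : Disjoint T s) :
      (RingHom.ker (partialEval R a T)).height + T.card ≤
        (RingHom.ker (partialEval R a ∅)).height := by
    induction T using Finset.induction_on with
    | empty => simp
    | insert i T hiT ih =>
      obtain ⟨his, hTs⟩ := Finset.disjoint_insert_left.1 hTs
      have hlt := Ideal.height_add_one_le_of_lt_of_isPrime
        (ker_partialEval_insert_lt hTs hiT his (h i his))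
      calc
        _ = (RingHom.ker (partialEval R a (insert i T))).height + 1 + T.card := by
          rw [Finset.card_insert_of_notMem hiT]; push_cast; ring
        _ ≤ _ := (add_le_add_left hlt _).trans (ih hTs)
  rw [← ker_partialEval_empty, ← Finset.card_compl_add_card s, Nat.cast_add]
  gcongr
  exact le_add_self.trans (chain sᶜ disjoint_compl_left)

section AraHt

universe u

variable {R : Type u} [CommRing R]

lemma ara_le_of_forall_le_ker_iff {ι : Type*} {I : Ideal R} (s : Finset ι) (f : ι → R)
    (h : ∀ (T : Type u) [CommRing T] [IsDomain T] (φ : R →+* T),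
      I ≤ RingHom.ker φ ↔ ∀ i ∈ s, φ (f i) = 0) :
    ara I ≤ s.card := by
  classical
  have hprime (P : Ideal R) [P.IsPrime] :
      Ideal.span (s.image f : Set R) ≤ P ↔ I ≤ P := by
    conv_rhs => rw [← Ideal.mk_ker (I := P), h]
    simp [Ideal.span_le, Set.subset_def, Ideal.Quotient.eq_zero_iff_mem]
  have hrad : (Ideal.span (s.image f : Set R)).radical = I.radical := by
    rw [Ideal.radical_eq_sInf, Ideal.radical_eq_sInf]
    congr 1
    ext P
    exact and_congr_left fun _ ↦ hprime P
  calc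
    ara I ≤ (s.image f).card := iInf₂_le (s.image f) hrad
    _ ≤ s.card := mod_cast Finset.card_image_le

lemma ht_le_ara [IsNoetherianRing R] {I : Ideal R} (hI : I ≠ ⊤) : ht I ≤ ara I := by
  refine le_iInf₂ fun s hs ↦ ?_
  have hs_top : Ideal.span (s : Set R) ≠ ⊤ := by
    rwa [Ne, ← Ideal.radical_eq_top, hs, Ideal.radical_eq_top]
  obtain ⟨p, hp⟩ := Ideal.nonempty_minimalPrimes hs_top
  have hIp : I ≤ p := Ideal.le_radical.trans (hs ▸ hp.isPrime.radical_le_iff.2 hp.le)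
  calc
    ht I ≤ Order.height (⟨p, hp.isPrime⟩ : PrimeSpectrum R) :=
      iInf₂_le (⟨p, hp.isPrime⟩ : PrimeSpectrum R) hIp
    _ = p.height := (PrimeSpectrum.height_eq_orderHeight ⟨p, hp.isPrime⟩).symm
    _ ≤ s.card := Ideal.height_le_card_of_mem_minimalPrimes_span_finset hp

end AraHt

section HankelMinors

variable {R : Type*} [CommRing R] {n : ℕ} {a : ℕ → R}

/-- The `2`-minors of the `2 × n` Hankel matrix with rows `a 0, …, a (n - 1)` and `a 1, …, a n`
vanish, i.e. `(a 0 : … : a n)` lies on the rational normal curve. -/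
def HankelMinorsVanish (n : ℕ) (a : ℕ → R) : Prop :=
  ∀ i < n, ∀ j < n, a i * a (j + 1) = a j * a (i + 1)

lemma hankelMinorsVanish_of_eq_zero (h : ∀ j < n, a j = 0) : HankelMinorsVanish n a :=
  fun i hi j hj ↦ by rw [h i hi, h j hj, zero_mul, zero_mul]

lemma pow_mul_eq_mul_pow_of_first_column {m : ℕ} (h : ∀ j < m, a 0 * a (j + 1) = a 1 * a j) :
    ∀ k ≤ m, a 0 ^ k * a k = a 0 * a 1 ^ k := by
  intro k hk
  induction k with
  | zero => simp
  | succ k ih =>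
    linear_combination a 0 ^ k * h k hk + a 1 * ih (by omega)

variable [IsDomain R]

lemma hankelMinorsVanish_of_first_column (h0 : a 0 ≠ 0)
    (h : ∀ j < n, a 0 * a (j + 1) = a 1 * a j) : HankelMinorsVanish n a := fun i hi j hj ↦
  mul_left_cancel₀ h0 (by linear_combination a i * h j hj - a j * h i hi)

lemma hankelMinorsVanish_of_interior_eq_zero (h : ∀ j, 1 ≤ j → j < n → a j = 0)
    (h0n : a 0 * a n = 0) : HankelMinorsVanish n a := by
  by_cases h0 : a 0 = 0
  · refine hankelMinorsVanish_of_eq_zero fun j hj ↦ ?_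
    obtain rfl | hj0 := Nat.eq_zero_or_pos j
    · exact h0
    · exact h j hj0 hj
  · have hlast : ∀ j, 1 ≤ j → j ≤ n → a j = 0 := fun j hj hjn ↦
      hjn.lt_or_eq.elim (h j hj) fun hjn ↦ hjn ▸ (mul_eq_zero.1 h0n).resolve_left h0
    refine hankelMinorsVanish_of_first_column h0 fun j hj ↦ ?_
    rw [hlast (j + 1) (by omega) hj, hlast 1 le_rfl (by omega), mul_zero, zero_mul]

lemma HankelMinorsVanish.eq_zero (h : HankelMinorsVanish n a) (h0 : a 0 = 0) :
    ∀ j < n, a j = 0 := by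
  intro j hj
  induction j with
  | zero => exact h0
  | succ j ih =>
    have hsq := h j (by omega) (j + 1) hj
    rw [ih (by omega), zero_mul] at hsq
    exact mul_self_eq_zero.1 hsq.symm

/-- The two cases are the two components `(x₁, …, xₙ₋₁)` and `I_X` of the ideal of the path. -/
lemma interior_eq_zero_or_first_column (h : ∀ i, i + 2 ≤ n → a i * a (i + 2) = a (i + 1) ^ 2) :
    (∀ j, 1 ≤ j → j < n → a j = 0) ∨ a 0 ≠ 0 ∧ ∀ j < n, a 0 * a (j + 1) = a 1 * a j := by
  by_cases h01 : a 0 * a 1 = 0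
  · left
    intro j hj hjn
    induction j, hj using Nat.le_induction with
    | base =>
      refine (mul_eq_zero.1 h01).elim (fun h0 ↦ ?_) id
      simpa [h0] using (h 0 hjn).symm
    | succ j _ ih => simpa [ih (by omega)] using (h j hjn).symm
  · right
    obtain ⟨h0, h1⟩ := mul_ne_zero_iff.1 h01
    suffices ∀ j < n, a j ≠ 0 ∧ a 0 * a (j + 1) = a 1 * a j from ⟨h0, fun j hj ↦ (this j hj).2⟩
    intro j hj
    induction j with
    | zero => exact ⟨h0, mul_comm _ _⟩
    | succ j ih =>
      obtain ⟨hj0, hcol⟩ := ih (by omega)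
      have hne : a (j + 1) ≠ 0 := right_ne_zero_of_mul (hcol ▸ mul_ne_zero h1 hj0)
      exact ⟨hne, mul_left_cancel₀ hj0
        (by linear_combination a 0 * h j (by omega) + a (j + 1) * hcol)⟩

lemma isAlgebraic_adjoin_pair_of_first_column (S : Type*) [CommRing S] [Algebra S R]
    (h0 : a 0 ≠ 0)
    (h : ∀ j < n, a 0 * a (j + 1) = a 1 * a j) {j : ℕ} (hj : j ≤ n) :
    IsAlgebraic (Algebra.adjoin S {a 0, a 1}) (a j) := by
  have hmem {x : R} (hx : x ∈ ({a 0, a 1} : Set R)) :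
      IsAlgebraic (Algebra.adjoin S {a 0, a 1}) x :=
    isAlgebraic_algebraMap (⟨x, Algebra.subset_adjoin hx⟩ : Algebra.adjoin S {a 0, a 1})
  induction j with
  | zero => exact hmem (by simp)
  | succ j ih =>
    have hmul : IsAlgebraic (Algebra.adjoin S {a 0, a 1}) (a 0 * a (j + 1)) :=
      h j hj ▸ (hmem (by simp)).mul (ih (by omega))
    exact IsAlgebraic.of_mul (mem_nonZeroDivisors_of_ne_zero h0) (hmem (by simp)) hmul

end HankelMinors

section RobbianoValla

variable {R : Type*} [CommRing R] {n i : ℕ} {a : ℕ → R}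

/-- The Robbiano–Valla polynomials, which for `1 ≤ i < n` cut out the rational normal curve
set-theoretically. Up to powers of `a 0`, they are the expansions of
`(a 0 * a (i + 1) - a 1 * a i) ^ i` with `a 0 * a 1 ^ k` replaced by `a 0 ^ k * a k`. -/
def robbianoValla (a : ℕ → R) (i : ℕ) : R :=
  ∑ k ∈ Finset.range (i + 1), (-1) ^ k * (i.choose k : R) * a k * a i ^ k * a (i + 1) ^ (i - k)

lemma map_robbianoValla {S : Type*} [CommRing S] (φ : R →+* S) (a : ℕ → R) (i : ℕ) :
    φ (robbianoValla a i) = robbianoValla (φ ∘ a) i := by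
  simp [robbianoValla]

lemma robbianoValla_of_forall_lt_eq_zero (h : ∀ k < i, a k = 0) :
    robbianoValla a i = (-1) ^ i * a i ^ (i + 1) := by
  rw [robbianoValla, Finset.sum_range_succ, Finset.sum_eq_zero]
  · simp only [Nat.choose_self, tsub_self]
    ring
  · intro k hk
    rw [h k (Finset.mem_range.1 hk)]
    ring

lemma pow_mul_robbianoValla (h : ∀ j < i, a 0 * a (j + 1) = a 1 * a j) :
    a 0 ^ i * robbianoValla a i = a 0 * (a 0 * a (i + 1) - a 1 * a i) ^ i := by
  rw [sub_eq_neg_add, add_pow, robbianoValla, Finset.mul_sum, Finset.mul_sum]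
  refine Finset.sum_congr rfl fun k hk ↦ ?_
  have hki : k ≤ i := Nat.lt_succ_iff.1 (Finset.mem_range.1 hk)
  rw [neg_pow (a 1 * a i), mul_pow (a 1), mul_pow, ← pow_mul_pow_sub (a 0) hki]
  linear_combination (-1) ^ k * (i.choose k : R) * a i ^ k * a (i + 1) ^ (i - k) *
    a 0 ^ (i - k) * pow_mul_eq_mul_pow_of_first_column h k hki

variable [IsDomain R]

lemma HankelMinorsVanish.robbianoValla_eq_zero (h : HankelMinorsVanish n a) (hi : i ≠ 0)
    (hin : i < n) : robbianoValla a i = 0 := by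
  by_cases h0 : a 0 = 0
  · rw [robbianoValla_of_forall_lt_eq_zero fun k hk ↦ h.eq_zero h0 k (hk.trans hin),
      h.eq_zero h0 i hin]
    simp
  · have hcol : ∀ j < n, a 0 * a (j + 1) = a 1 * a j := fun j hj ↦
      (h 0 (by omega) j hj).trans (mul_comm _ _)
    have hmul := pow_mul_robbianoValla fun j hj ↦ hcol j (hj.trans hin)
    rw [hcol i hin, sub_self, zero_pow hi, mul_zero] at hmul
    exact (mul_eq_zero.1 hmul).resolve_left (pow_ne_zero i h0)

lemma hankelMinorsVanish_of_robbianoValla_eq_zero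
    (h : ∀ i, i ≠ 0 → i < n → robbianoValla a i = 0) : HankelMinorsVanish n a := by
  by_cases h0 : a 0 = 0
  · refine hankelMinorsVanish_of_eq_zero fun j ↦ ?_
    induction j using Nat.strong_induction_on with
    | _ j ih =>
      intro hjn
      by_cases hj : j = 0
      · rwa [hj]
      · simpa [robbianoValla_of_forall_lt_eq_zero fun k hk ↦ ih k hk (hk.trans hjn)]
          using h j hj hjn
  · refine hankelMinorsVanish_of_first_column h0 fun j ↦ ?_
    induction j using Nat.strong_induction_on with
    | _ j ih =>
      intro hjn
      by_cases hj : j = 0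
      · rw [hj, mul_comm]
      · have hmul := pow_mul_robbianoValla fun k hk ↦ ih k hk (hk.trans hjn)
        rw [h j hj hjn, mul_zero, eq_comm, mul_eq_zero] at hmul
        exact sub_eq_zero.1 (pow_eq_zero_iff hj |>.1 (hmul.resolve_left h0))

lemma hankelMinorsVanish_iff_robbianoValla :
    HankelMinorsVanish n a ↔ ∀ i, i ≠ 0 → i < n → robbianoValla a i = 0 :=
  ⟨fun h _ hi hin ↦ h.robbianoValla_eq_zero hi hin, hankelMinorsVanish_of_robbianoValla_eq_zero⟩

end RobbianoValla

section HankelEdgeIdeal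

variable {n : ℕ} {K : Type*} [Field K] {G : SimpleGraph (Fin n)}

/-- The variable `x_j` with a natural number as index; junk (`j` is read modulo `n + 1`) when
`n < j`. -/
noncomputable def hankelVar (n : ℕ) (K : Type*) [Field K] (j : ℕ) : MvPolynomial (Fin (n + 1)) K :=
  X (Fin.ofNat (n + 1) j)

lemma hankelVar_val (j : Fin (n + 1)) : hankelVar n K j = X j := by
  rw [hankelVar, Fin.ofNat_val_eq_self]

lemma hg_eq_hankelVar (i j : Fin n) :
    hg n K i j =
      hankelVar n K i * hankelVar n K (j + 1) - hankelVar n K j * hankelVar n K (i + 1) := by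
  simp [hg, ← hankelVar_val]

lemma hankelIdeal_le_ker_iff {T : Type*} [CommRing T] (φ : MvPolynomial (Fin (n + 1)) K →+* T) :
    hankelIdeal n K G ≤ RingHom.ker φ ↔ ∀ i j : Fin n, i < j → G.Adj i j →
      φ (hankelVar n K i) * φ (hankelVar n K (j + 1)) =
        φ (hankelVar n K j) * φ (hankelVar n K (i + 1)) := by
  have hker (i j : Fin n) : hg n K i j ∈ RingHom.ker φ ↔
      φ (hankelVar n K i) * φ (hankelVar n K (j + 1)) =
        φ (hankelVar n K j) * φ (hankelVar n K (i + 1)) := by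
    rw [RingHom.mem_ker, hg_eq_hankelVar, map_sub, map_mul, map_mul, sub_eq_zero]
  simp only [hankelIdeal, Ideal.span_le, ← hker]
  exact ⟨fun h i j hij hadj ↦ h ⟨i, j, hij, hadj, rfl⟩,
    fun h f ⟨i, j, hij, hadj, hf⟩ ↦ hf ▸ h i j hij hadj⟩

lemma hankelIdeal_ne_top : hankelIdeal n K G ≠ ⊤ := by
  refine ne_top_of_le_ne_top (RingHom.ker_ne_top (constantCoeff (σ := Fin (n + 1)) (R := K)))
    ((hankelIdeal_le_ker_iff _).2 fun i j _ _ ↦ ?_)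
  simp [hankelVar]

lemma pathG_adj {i : ℕ} (hi : i + 1 < n) :
    (pathG n).Adj ⟨i, i.lt_succ_self.trans hi⟩ ⟨i + 1, hi⟩ := by
  simp [pathG]

lemma pathG_le_cycleG : pathG n ≤ cycleG n := by
  intro i j hij
  simp only [pathG, cycleG, SimpleGraph.fromRel_adj] at hij ⊢
  tauto

variable {T : Type*} [CommRing T] {φ : MvPolynomial (Fin (n + 1)) K →+* T}

lemma consecutive_minor_of_pathG_le (hG : pathG n ≤ G)
    (hφ : hankelIdeal n K G ≤ RingHom.ker φ) {i : ℕ} (hi : i + 2 ≤ n) :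
    φ (hankelVar n K i) * φ (hankelVar n K (i + 2)) = φ (hankelVar n K (i + 1)) ^ 2 :=
  ((hankelIdeal_le_ker_iff φ).1 hφ _ _ (by simp) (hG (pathG_adj hi))).trans (sq _).symm

lemma HankelMinorsVanish.hankelIdeal_le_ker
    (h : HankelMinorsVanish n fun j ↦ φ (hankelVar n K j)) :
    hankelIdeal n K G ≤ RingHom.ker φ :=
  (hankelIdeal_le_ker_iff φ).2 fun i j _ _ ↦ h i i.2 j j.2

variable [IsDomain T]

lemma interior_eq_zero_or_first_column_of_hankelIdeal_le_ker (hG : pathG n ≤ G)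
    (hφ : hankelIdeal n K G ≤ RingHom.ker φ) :
    (∀ j, 1 ≤ j → j < n → φ (hankelVar n K j) = 0) ∨
      φ (hankelVar n K 0) ≠ 0 ∧ ∀ j < n,
        φ (hankelVar n K 0) * φ (hankelVar n K (j + 1)) =
          φ (hankelVar n K 1) * φ (hankelVar n K j) :=
  interior_eq_zero_or_first_column (a := fun j ↦ φ (hankelVar n K j))
    fun _ hi ↦ consecutive_minor_of_pathG_le hG hφ hi

lemma hankelIdeal_le_ker_iff_consecutive_minors (hn : 0 < n) (hG : pathG n ≤ G)
    (hends : ¬G.Adj ⟨0, hn⟩ ⟨n - 1, Nat.sub_one_lt_of_lt hn⟩) :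
    hankelIdeal n K G ≤ RingHom.ker φ ↔ ∀ i, i + 2 ≤ n →
      φ (hankelVar n K i) * φ (hankelVar n K (i + 2)) = φ (hankelVar n K (i + 1)) ^ 2 := by
  refine ⟨fun hφ _ ↦ consecutive_minor_of_pathG_le hG hφ, fun h ↦ ?_⟩
  obtain hzero | ⟨h0, hcol⟩ :=
    interior_eq_zero_or_first_column (a := fun j ↦ φ (hankelVar n K j)) h
  · rw [hankelIdeal_le_ker_iff]
    intro i j hij hadj
    have hinner : 1 ≤ (i : ℕ) ∨ (j : ℕ) + 1 < n := by
      by_contra! hnot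
      have hi : i = ⟨0, hn⟩ := Fin.ext (by simp only; omega)
      have hj : j = ⟨n - 1, Nat.sub_one_lt_of_lt hn⟩ := Fin.ext (by simp only; omega)
      exact hends (hi ▸ hj ▸ hadj)
    rw [hzero j (i.val.zero_le.trans_lt hij) j.2, zero_mul]
    obtain hi | hj := hinner
    · rw [hzero i hi i.2, zero_mul]
    · rw [hzero (j + 1) (by omega) hj, mul_zero]
  · exact (hankelMinorsVanish_of_first_column h0 hcol).hankelIdeal_le_ker

lemma hankelIdeal_le_ker_iff_hankelMinorsVanish (hn : 0 < n) (hG : pathG n ≤ G)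
    (hends : G.Adj ⟨0, hn⟩ ⟨n - 1, Nat.sub_one_lt_of_lt hn⟩) :
    hankelIdeal n K G ≤ RingHom.ker φ ↔
      HankelMinorsVanish n fun j ↦ φ (hankelVar n K j) := by
  refine ⟨fun hφ ↦ ?_, fun h ↦ h.hankelIdeal_le_ker⟩
  obtain hzero | ⟨h0, hcol⟩ := interior_eq_zero_or_first_column_of_hankelIdeal_le_ker hG hφ
  · have hn1 : 0 < n - 1 := Nat.pos_of_ne_zero fun h ↦ hends.ne (Fin.ext h.symm)
    have hminor := (hankelIdeal_le_ker_iff φ).1 hφ _ _ hn1 hends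
    rw [zero_add, hzero 1 le_rfl (by omega), mul_zero, Nat.sub_add_cancel hn] at hminor
    exact hankelMinorsVanish_of_interior_eq_zero hzero hminor
  · exact hankelMinorsVanish_of_first_column h0 hcol

theorem ara_hankelIdeal_le (hn : 0 < n) (hG : pathG n ≤ G) :
    ara (hankelIdeal n K G) ≤ ((n - 1 : ℕ) : ℕ∞) := by
  by_cases hends : G.Adj ⟨0, hn⟩ ⟨n - 1, Nat.sub_one_lt_of_lt hn⟩
  · rw [← Nat.card_Ico 1 n]
    refine ara_le_of_forall_le_ker_iff _ (robbianoValla (hankelVar n K)) fun T _ _ φ ↦ ?_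
    simp only [hankelIdeal_le_ker_iff_hankelMinorsVanish hn hG hends,
      hankelMinorsVanish_iff_robbianoValla, map_robbianoValla, Finset.mem_Ico, and_imp,
      Nat.one_le_iff_ne_zero, Function.comp_def]
  · have hrange (i : ℕ) : i ∈ Finset.range (n - 1) ↔ i + 2 ≤ n := by
      rw [Finset.mem_range]; omega
    rw [← Finset.card_range (n - 1)]
    refine ara_le_of_forall_le_ker_iff _ (fun i ↦
      hankelVar n K i * hankelVar n K (i + 2) - hankelVar n K (i + 1) ^ 2) fun T _ _ φ ↦ ?_
    simp only [hankelIdeal_le_ker_iff_consecutive_minors hn hG hends, map_sub, map_mul, map_pow,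
      sub_eq_zero, hrange]

section Height

variable [Algebra K T] {ψ : MvPolynomial (Fin (n + 1)) K →ₐ[K] T}

lemma exists_card_le_two_forall_isAlgebraic_adjoin (hG : pathG n ≤ G)
    (hψ : hankelIdeal n K G ≤ RingHom.ker ψ) :
    ∃ s : Finset (Fin (n + 1)), s.card ≤ 2 ∧
      ∀ i ∉ s, IsAlgebraic (Algebra.adjoin K ((ψ ∘ X) '' (s : Set (Fin (n + 1))))) (ψ (X i)) := by
  obtain hzero | ⟨h0, hcol⟩ :=
    interior_eq_zero_or_first_column_of_hankelIdeal_le_ker (φ := ψ.toRingHom) hG hψ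
  · refine ⟨{0, Fin.last n}, Finset.card_le_two, fun i hi ↦ ?_⟩
    obtain ⟨hi0, hin⟩ : i ≠ 0 ∧ i ≠ Fin.last n := by simpa using hi
    have hzero := hzero i (Nat.one_le_iff_ne_zero.2 (Fin.val_ne_zero_iff.2 hi0))
      (Fin.val_lt_last hin)
    rw [hankelVar_val] at hzero
    exact hzero ▸ isAlgebraic_zero
  · refine ⟨{Fin.ofNat (n + 1) 0, Fin.ofNat (n + 1) 1}, Finset.card_le_two, fun i _ ↦ ?_⟩
    have halg := isAlgebraic_adjoin_pair_of_first_column K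
      (a := fun j ↦ ψ (hankelVar n K j)) h0 hcol (Fin.is_le i)
    rw [hankelVar_val] at halg
    rw [Finset.coe_pair, Set.image_pair]
    exact halg

theorem add_one_le_height_ker_add_two (hG : pathG n ≤ G) (hψ : hankelIdeal n K G ≤ RingHom.ker ψ) :
    (n + 1 : ℕ∞) ≤ (RingHom.ker ψ).height + 2 := by
  obtain ⟨s, hs, halg⟩ := exists_card_le_two_forall_isAlgebraic_adjoin hG hψ
  have hcard := card_le_height_ker_aeval_add_card (R := K) halg
  rw [← aeval_unique ψ, Fintype.card_fin, Nat.cast_add, Nat.cast_one] at hcard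
  exact hcard.trans (by gcongr; exact mod_cast hs)

end Height

theorem le_ht_hankelIdeal (hG : pathG n ≤ G) :
    ((n - 1 : ℕ) : ℕ∞) ≤ ht (hankelIdeal n K G) := by
  refine le_iInf₂ fun P hP ↦ ?_
  rw [← PrimeSpectrum.height_eq_orderHeight]
  have hker : RingHom.ker (Ideal.Quotient.mkₐ K P.asIdeal) = P.asIdeal :=
    Ideal.Quotient.mkₐ_ker K P.asIdeal
  have h := add_one_le_height_ker_add_two hG (hker ▸ hP)
  rw [hker] at h
  cases hh : P.asIdeal.height with
  | top => exact le_top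
  | coe k =>
    rw [hh] at h
    norm_cast at h ⊢
    omega

end HankelEdgeIdeal

/-- For a connected labeled Hamiltonian or semi-Hamiltonian graph `G` on
`[n]`, `ara(I_G) = n - 1`; in particular `I_G` is a set-theoretic complete intersection. -/
theorem stmt_12 (n : ℕ) (K : Type*) [Field K] (hn : 2 ≤ n)
    (G : SimpleGraph (Fin n)) (hG : G.Connected)
    (hHam : cycleG n ≤ G ∨
      (pathG n ≤ G ∧ ¬ G.Adj ⟨0, by omega⟩ ⟨n - 1, by omega⟩)) :
    ara (hankelIdeal n K G) = ((n - 1 : ℕ) : ℕ∞) ∧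
      ht (hankelIdeal n K G) = ara (hankelIdeal n K G) := by
  have hpath : pathG n ≤ G := hHam.elim pathG_le_cycleG.trans And.left
  have hlower : ((n - 1 : ℕ) : ℕ∞) ≤ ht (hankelIdeal n K G) := le_ht_hankelIdeal hpath
  have hmiddle : ht (hankelIdeal n K G) ≤ ara (hankelIdeal n K G) := ht_le_ara hankelIdeal_ne_top
  have hupper : ara (hankelIdeal n K G) ≤ ((n - 1 : ℕ) : ℕ∞) :=
    ara_hankelIdeal_le (by omega) hpath
  exact ⟨hupper.antisymm (hlower.trans hmiddle), hmiddle.antisymm (hupper.trans hlower)⟩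
end
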